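/- Let λ ∈ ℝ and define E(μ) := ∫_{ℝ^d} (λ/2)|x|² dμ on the set P₂^a(ℝ^d) of absolutely continuous Borel probability measures on ℝ^d with finite second moment. Fix τ > 0 with λτ > −1. Then for any μ, ν ∈ P₂^a(ℝ^d) with ν_τ the proximal point of ν: W₂²(μ, ν_τ) = (1+λτ)^{−1} [ W₂²(μ,ν) + 2τ( E(μ) − (1+λτ)^{−1} E(ν) ) ]. -/

import Mathlib

open MeasureTheory Filter ENNReal

noncomputable section

/-- Euclidean space `ℝ^d`. -/
abbrev Euc (d : ℕ) := EuclideanSpace ℝ (Fin d)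

/-- The squared 2-Wasserstein distance, as an extended nonnegative real:
the infimum over couplings `γ` (Borel probability measures on `ℝ^d × ℝ^d`
with first marginal `μ` and second marginal `ν`) of `∫ |x-y|² dγ`. -/
noncomputable def W2sq {d : ℕ} (μ ν : Measure (Euc d)) : ℝ≥0∞ :=
  ⨅ (γ : Measure (Euc d × Euc d)) (_ : γ.map Prod.fst = μ ∧ γ.map Prod.snd = ν),
    ∫⁻ q, ENNReal.ofReal (‖q.1 - q.2‖ ^ 2) ∂γ

/-- The 2-Wasserstein distance (a real number; degenerate when `W2sq = ∞`). -/
noncomputable def W2 {d : ℕ} (μ ν : Measure (Euc d)) : ℝ :=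
  Real.sqrt (W2sq μ ν).toReal

/-- `γ` is an optimal transport plan from `μ` to `ν`. -/
def IsOptimalPlan {d : ℕ} (μ ν : Measure (Euc d)) (γ : Measure (Euc d × Euc d)) : Prop :=
  γ.map Prod.fst = μ ∧ γ.map Prod.snd = ν ∧
    ∫⁻ q, ENNReal.ofReal (‖q.1 - q.2‖ ^ 2) ∂γ = W2sq μ ν

/-- `P₂ᵃ(ℝ^d)`: Borel probability measures with finite second moment, absolutely
continuous with respect to Lebesgue measure. -/
def P2a (d : ℕ) : Set (Measure (Euc d)) :=
  {μ | IsProbabilityMeasure μ ∧ μ ≪ volume ∧ ∫⁻ x, ENNReal.ofReal (‖x‖ ^ 2) ∂μ ≠ ⊤}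

/-- The potential energy `E(μ) = ∫ (λ/2)|x|² dμ`. -/
noncomputable def Epot {d : ℕ} (lam : ℝ) (μ : Measure (Euc d)) : ℝ :=
  ∫ x, lam / 2 * ‖x‖ ^ 2 ∂μ

/-- The second moment `∫ |x|² dμ`. -/
noncomputable def sndMom {d : ℕ} (μ : Measure (Euc d)) : ℝ := ∫ x, ‖x‖ ^ 2 ∂μ

/-- `ν` is a proximal point of `μ` for the (real-valued) functional `F`, with step `τ`,
relative to the class `S`: it minimizes `ρ ↦ W₂²(μ,ρ)/(2τ) + F(ρ)` over `S`. -/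
def IsProximalPt {d : ℕ} (S : Set (Measure (Euc d))) (F : Measure (Euc d) → ℝ) (τ : ℝ)
    (μ ν : Measure (Euc d)) : Prop :=
  ν ∈ S ∧ ∀ ρ ∈ S, (W2 μ ν) ^ 2 / (2 * τ) + F ν ≤ (W2 μ ρ) ^ 2 / (2 * τ) + F ρ

/-!
For a coupling `γ` of `μ` and `ν` and `s > 0`, pushing the second coordinate forward by `y ↦ s y`
gives a coupling of `μ` and the dilated measure `s_# ν`, and every coupling of those arises in this
way. Integrating
`|x - s y|² = s |x - y|² + (1 - s) |x|² - s (1 - s) |y|²`,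
in which the last two terms depend on the marginals alone, gives (`W2_smul`)
`W₂²(μ, s_# ν) = s W₂²(μ, ν) + (1 - s) ∫ |x|² dμ - s (1 - s) ∫ |y|² dν`.

With `s = (1 + λτ)⁻¹`, so that `1 - s = λτ s`, this is the claimed identity as soon as the proximal
point is known to be `s_# ν` (`proximal_eq_smul`). For that, compare a minimizer `ρ` with the
competitor `s_# ν`: the dilation formula, applied to `W₂²(ν, s_# ν)` and to `W₂²(ρ, s_# ν)`, turns
the minimality inequality into `W₂²(ρ, s_# ν) ≤ 0`, and `W₂` separates points
(`eq_of_W2sq_eq_zero`).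
-/

/-- `γ` has marginals `μ` and `ν`. -/
def Coupling {d : ℕ} (μ ν : Measure (Euc d)) (γ : Measure (Euc d × Euc d)) : Prop :=
  γ.map Prod.fst = μ ∧ γ.map Prod.snd = ν

lemma Coupling.isProbabilityMeasure {d : ℕ} {μ ν : Measure (Euc d)}
    {γ : Measure (Euc d × Euc d)} [hμ : IsProbabilityMeasure μ] (h : Coupling μ ν γ) :
    IsProbabilityMeasure γ := by
  constructor
  have := hμ.measure_univ
  rwa [← h.1, Measure.map_apply measurable_fst MeasurableSet.univ, Set.preimage_univ] at this

lemma Coupling.swap {d : ℕ} {μ ν : Measure (Euc d)} {γ : Measure (Euc d × Euc d)}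
    (h : Coupling μ ν γ) : Coupling ν μ (γ.map Prod.swap) := by
  constructor
  · rw [Measure.map_map measurable_fst measurable_swap]; exact h.2
  · rw [Measure.map_map measurable_snd measurable_swap]; exact h.1

/-- Pushing the second coordinate of a coupling forward by the dilation `s`. -/
lemma Coupling.smul {d : ℕ} {μ ν : Measure (Euc d)} {γ : Measure (Euc d × Euc d)}
    (h : Coupling μ ν γ) (s : ℝ) :
    Coupling μ (ν.map (s • ·)) (γ.map fun q => (q.1, s • q.2)) := by
  have hm : Measurable fun q : Euc d × Euc d => (q.1, s • q.2) := by fun_prop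
  constructor
  · rw [Measure.map_map measurable_fst hm]; exact h.1
  · rw [Measure.map_map measurable_snd hm, ← h.2,
      Measure.map_map (by fun_prop) measurable_snd]
    rfl

lemma W2sq_le {d : ℕ} {μ ν : Measure (Euc d)} {γ : Measure (Euc d × Euc d)}
    (h : Coupling μ ν γ) : W2sq μ ν ≤ ∫⁻ q, ENNReal.ofReal (‖q.1 - q.2‖ ^ 2) ∂γ :=
  iInf₂_le (f := fun (γ : Measure (Euc d × Euc d)) (_ : Coupling μ ν γ) =>
    ∫⁻ q, ENNReal.ofReal (‖q.1 - q.2‖ ^ 2) ∂γ) γ h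

lemma exists_coupling_lt {d : ℕ} {μ ν : Measure (Euc d)} {a : ℝ≥0∞} (h : W2sq μ ν < a) :
    ∃ γ, Coupling μ ν γ ∧ ∫⁻ q, ENNReal.ofReal (‖q.1 - q.2‖ ^ 2) ∂γ < a := by
  unfold W2sq at h
  simp only [iInf_lt_iff] at h
  obtain ⟨γ, hγ, hlt⟩ := h
  exact ⟨γ, hγ, hlt⟩

lemma W2sq_le_comm {d : ℕ} (μ ν : Measure (Euc d)) : W2sq μ ν ≤ W2sq ν μ := by
  refine le_iInf₂ fun γ hγ => (W2sq_le (Coupling.swap hγ)).trans_eq ?_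
  rw [lintegral_map (by fun_prop) measurable_swap]
  simp [norm_sub_rev]

lemma W2sq_comm {d : ℕ} (μ ν : Measure (Euc d)) : W2sq μ ν = W2sq ν μ :=
  le_antisymm (W2sq_le_comm μ ν) (W2sq_le_comm ν μ)

lemma W2sq_self {d : ℕ} (μ : Measure (Euc d)) : W2sq μ μ = 0 := by
  have hm : Measurable fun x : Euc d => (x, x) := by fun_prop
  have hc : Coupling μ μ (μ.map fun x => (x, x)) := by
    constructor
    · rw [Measure.map_map measurable_fst hm]; exact Measure.map_id
    · rw [Measure.map_map measurable_snd hm]; exact Measure.map_id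
  refine le_antisymm ((W2sq_le hc).trans_eq ?_) zero_le
  rw [lintegral_map (by fun_prop) hm]
  simp

/-- For a coupling `γ` of cost below `ε δ²`, Markov's inequality bounds by `ε` the `γ`-mass of the
pairs at distance at least `δ`, so `μ F` exceeds the `ν`-mass of the `δ`-thickening by at most `ε`.
When `W2sq μ ν = 0`, such couplings exist for every `ε > 0`. -/
lemma measure_le_cthickening {d : ℕ} {μ ν : Measure (Euc d)} (h : W2sq μ ν = 0)
    {F : Set (Euc d)} (hF : IsClosed F) {δ : ℝ} (hδ : 0 < δ) :
    μ F ≤ ν (Metric.cthickening δ F) := by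
  refine _root_.le_of_forall_pos_le_add fun ε hε => ?_
  have hδ' : ENNReal.ofReal (δ ^ 2) ≠ 0 := by
    rw [Ne, ENNReal.ofReal_eq_zero, not_le]; positivity
  have hlt : W2sq μ ν < ε * ENNReal.ofReal (δ ^ 2) := by
    rw [h]; exact ENNReal.mul_pos hε.ne' hδ'
  obtain ⟨γ, hγ, hcost⟩ := exists_coupling_lt hlt
  have hsub : Prod.fst ⁻¹' F ⊆ Prod.snd ⁻¹' (Metric.cthickening δ F) ∪
      {q : Euc d × Euc d | ENNReal.ofReal (δ ^ 2) ≤ ENNReal.ofReal (‖q.1 - q.2‖ ^ 2)} := by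
    intro q hq
    by_cases hd : ‖q.1 - q.2‖ ≤ δ
    · left
      refine Metric.mem_cthickening_of_dist_le q.2 q.1 δ F hq ?_
      rwa [dist_comm, dist_eq_norm]
    · right
      have : δ ≤ ‖q.1 - q.2‖ := (not_le.1 hd).le
      exact ENNReal.ofReal_le_ofReal (by gcongr)
  calc μ F = γ (Prod.fst ⁻¹' F) := by
        rw [← hγ.1, Measure.map_apply measurable_fst hF.measurableSet]
    _ ≤ γ (Prod.snd ⁻¹' (Metric.cthickening δ F)) + γ {q : Euc d × Euc d |
          ENNReal.ofReal (δ ^ 2) ≤ ENNReal.ofReal (‖q.1 - q.2‖ ^ 2)} :=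
        (measure_mono hsub).trans (measure_union_le _ _)
    _ ≤ ν (Metric.cthickening δ F) + ε := by
        gcongr
        · rw [← hγ.2, Measure.map_apply measurable_snd Metric.isClosed_cthickening.measurableSet]
        · refine (meas_ge_le_lintegral_div (by fun_prop) hδ' ENNReal.ofReal_ne_top).trans ?_
          exact ENNReal.div_le_of_le_mul hcost.le

lemma measure_closed_le {d : ℕ} {μ ν : Measure (Euc d)} [IsFiniteMeasure ν]
    (h : W2sq μ ν = 0) {F : Set (Euc d)} (hF : IsClosed F) : μ F ≤ ν F := by
  have ht := tendsto_measure_cthickening_of_isClosed (μ := ν) (s := F)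
    ⟨1, one_pos, measure_ne_top _ _⟩ hF
  refine ge_of_tendsto (ht.mono_left (nhdsWithin_le_nhds (s := Set.Ioi 0))) ?_
  filter_upwards [self_mem_nhdsWithin] with δ hδ using measure_le_cthickening h hF hδ

/-- `W₂` separates points: no optimal plan is needed, since a coupling of arbitrarily small cost
already compares the two measures on closed sets. -/
lemma eq_of_W2sq_eq_zero {d : ℕ} {μ ν : Measure (Euc d)} [IsFiniteMeasure μ]
    [IsFiniteMeasure ν] (h : W2sq μ ν = 0) : μ = ν := by
  have hcl : ∀ F : Set (Euc d), IsClosed F → μ F = ν F := fun F hF =>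
    le_antisymm (measure_closed_le h hF) (measure_closed_le (by rwa [W2sq_comm]) hF)
  refine ext_of_generate_finite {F | IsClosed F} ?_ isPiSystem_isClosed hcl
    (hcl _ isClosed_univ)
  rw [← borel_eq_generateFrom_isClosed]
  exact BorelSpace.measurable_eq

lemma integrable_sq {d : ℕ} {μ : Measure (Euc d)} (hμ : μ ∈ P2a d) :
    Integrable (fun x => ‖x‖ ^ 2) μ := by
  refine ⟨by fun_prop, ?_⟩
  rw [hasFiniteIntegral_iff_ofReal (ae_of_all _ fun x => by positivity)]
  exact hμ.2.2.lt_top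

lemma Coupling.integrable_cost {d : ℕ} {μ ν : Measure (Euc d)} {γ : Measure (Euc d × Euc d)}
    (h : Coupling μ ν γ) (hμ : μ ∈ P2a d) (hν : ν ∈ P2a d) :
    Integrable (fun q => ‖q.1 - q.2‖ ^ 2) γ ∧ Integrable (fun q => ‖q.1‖ ^ 2) γ ∧
      Integrable (fun q => ‖q.2‖ ^ 2) γ := by
  have h1 : Integrable (fun q : Euc d × Euc d => ‖q.1‖ ^ 2) γ := by
    have := integrable_sq hμ
    rw [← h.1] at this
    exact this.comp_measurable measurable_fst
  have h2 : Integrable (fun q : Euc d × Euc d => ‖q.2‖ ^ 2) γ := by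
    have := integrable_sq hν
    rw [← h.2] at this
    exact this.comp_measurable measurable_snd
  refine ⟨((h1.add h2).const_mul 2).mono' (by fun_prop) (ae_of_all _ fun q => ?_), h1, h2⟩
  have := parallelogram_law_with_norm ℝ q.1 q.2
  simp only [Pi.add_apply, Real.norm_eq_abs, abs_of_nonneg (sq_nonneg ‖q.1 - q.2‖)]
  nlinarith [sq_nonneg ‖q.1 + q.2‖]

lemma Coupling.integral_fst {d : ℕ} {μ ν : Measure (Euc d)} {γ : Measure (Euc d × Euc d)}
    (h : Coupling μ ν γ) : ∫ q, ‖q.1‖ ^ 2 ∂γ = sndMom μ := by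
  rw [sndMom, ← h.1, integral_map measurable_fst.aemeasurable (by fun_prop)]

lemma Coupling.integral_snd {d : ℕ} {μ ν : Measure (Euc d)} {γ : Measure (Euc d × Euc d)}
    (h : Coupling μ ν γ) : ∫ q, ‖q.2‖ ^ 2 ∂γ = sndMom ν := by
  rw [sndMom, ← h.2, integral_map measurable_snd.aemeasurable (by fun_prop)]

lemma W2_sq {d : ℕ} (μ ν : Measure (Euc d)) : W2 μ ν ^ 2 = (W2sq μ ν).toReal :=
  Real.sq_sqrt ENNReal.toReal_nonneg

lemma W2_comm {d : ℕ} (μ ν : Measure (Euc d)) : W2 μ ν = W2 ν μ := by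
  rw [W2, W2, W2sq_comm]

lemma W2sq_ne_top {d : ℕ} {μ ν : Measure (Euc d)} (hμ : μ ∈ P2a d) (hν : ν ∈ P2a d) :
    W2sq μ ν ≠ ⊤ := by
  have := hμ.1
  have := hν.1
  have hc : Coupling μ ν (μ.prod ν) := by
    constructor
    · simp [Measure.map_fst_prod]
    · simp [Measure.map_snd_prod]
  refine ne_top_of_le_ne_top ?_ (W2sq_le hc)
  have := (hc.integrable_cost hμ hν).1.2
  rw [hasFiniteIntegral_iff_ofReal (ae_of_all _ fun x => by positivity)] at this
  exact this.ne

lemma W2_sq_le {d : ℕ} {μ ν : Measure (Euc d)} {γ : Measure (Euc d × Euc d)}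
    (h : Coupling μ ν γ) (hμ : μ ∈ P2a d) (hν : ν ∈ P2a d) :
    W2 μ ν ^ 2 ≤ ∫ q, ‖q.1 - q.2‖ ^ 2 ∂γ := by
  rw [W2_sq]
  refine ENNReal.toReal_le_of_le_ofReal (integral_nonneg fun q => by positivity) ?_
  rw [ofReal_integral_eq_lintegral_ofReal (h.integrable_cost hμ hν).1
    (ae_of_all _ fun q => by positivity)]
  exact W2sq_le h

lemma exists_coupling_integral_lt {d : ℕ} {μ ν : Measure (Euc d)} (hμ : μ ∈ P2a d)
    (hν : ν ∈ P2a d) {ε : ℝ} (hε : 0 < ε) :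
    ∃ γ, Coupling μ ν γ ∧ ∫ q, ‖q.1 - q.2‖ ^ 2 ∂γ < W2 μ ν ^ 2 + ε := by
  have hlt : W2sq μ ν < ENNReal.ofReal (W2 μ ν ^ 2 + ε) := by
    rw [W2_sq, ENNReal.lt_ofReal_iff_toReal_lt (W2sq_ne_top hμ hν)]
    linarith
  obtain ⟨γ, hγ, hcost⟩ := exists_coupling_lt hlt
  refine ⟨γ, hγ, ?_⟩
  rw [← ofReal_integral_eq_lintegral_ofReal (hγ.integrable_cost hμ hν).1
    (ae_of_all _ fun q => by positivity)] at hcost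
  exact (ENNReal.ofReal_lt_ofReal_iff (by positivity)).1 hcost

lemma sndMom_smul {d : ℕ} (ν : Measure (Euc d)) (s : ℝ) :
    sndMom (ν.map (s • ·)) = s ^ 2 * sndMom ν := by
  rw [sndMom, integral_map (by fun_prop) (by fun_prop), sndMom, ← integral_const_mul]
  simp [norm_smul, mul_pow]

lemma smul_mem_P2a {d : ℕ} {ν : Measure (Euc d)} (hν : ν ∈ P2a d) {s : ℝ} (hs : 0 < s) :
    ν.map (s • ·) ∈ P2a d := by
  have := hν.1
  have hm : Measurable fun x : Euc d => s • x := by fun_prop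
  refine ⟨Measure.isProbabilityMeasure_map hm.aemeasurable, ?_, ?_⟩
  · refine (hν.2.1.map hm).trans ?_
    rw [Measure.map_addHaar_smul _ hs.ne']
    exact Measure.smul_absolutelyContinuous
  · rw [lintegral_map (by fun_prop) hm]
    have := ((integrable_sq hν).const_mul (s ^ 2)).2
    rw [hasFiniteIntegral_iff_ofReal (ae_of_all _ fun x => by positivity)] at this
    simpa [norm_smul, mul_pow] using this.ne

lemma W2_smul_le {d : ℕ} {μ ν : Measure (Euc d)} (hμ : μ ∈ P2a d) (hν : ν ∈ P2a d)
    {s : ℝ} (hs : 0 < s) :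
    W2 μ (ν.map (s • ·)) ^ 2 ≤
      s * W2 μ ν ^ 2 + (1 - s) * sndMom μ - s * (1 - s) * sndMom ν := by
  refine _root_.le_of_forall_pos_le_add fun ε hε => ?_
  obtain ⟨γ, hγ, hlt⟩ := exists_coupling_integral_lt hμ hν (div_pos hε hs)
  obtain ⟨hc, h1, h2⟩ := hγ.integrable_cost hμ hν
  have hle := W2_sq_le (hγ.smul s) hμ (smul_mem_P2a hν hs)
  rw [integral_map (by fun_prop) (by fun_prop)] at hle
  have hpt : ∀ q : Euc d × Euc d, ‖q.1 - s • q.2‖ ^ 2 =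
      s * ‖q.1 - q.2‖ ^ 2 + (1 - s) * ‖q.1‖ ^ 2 - s * (1 - s) * ‖q.2‖ ^ 2 := fun q => by
    rw [norm_sub_sq_real, norm_sub_sq_real, norm_smul, inner_smul_right, mul_pow,
      Real.norm_eq_abs, sq_abs]
    ring
  simp only [hpt] at hle
  have h12 : Integrable (fun q : Euc d × Euc d =>
      s * ‖q.1 - q.2‖ ^ 2 + (1 - s) * ‖q.1‖ ^ 2) γ := (hc.const_mul _).add (h1.const_mul _)
  rw [integral_sub h12 (h2.const_mul _),
    integral_add (hc.const_mul _) (h1.const_mul _), integral_const_mul, integral_const_mul,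
    integral_const_mul, hγ.integral_fst, hγ.integral_snd] at hle
  have : s * ∫ q, ‖q.1 - q.2‖ ^ 2 ∂γ ≤ s * (W2 μ ν ^ 2 + ε / s) := by gcongr
  have he : s * (W2 μ ν ^ 2 + ε / s) = s * W2 μ ν ^ 2 + ε := by field_simp
  linarith

/-- Dilating one marginal changes `W₂²` by an explicit combination of second moments. It comes
from `|x - s y|² = s |x - y|² + (1 - s) |x|² - s (1 - s) |y|²`, whose last two terms have the same
integral for every coupling; the dilation by `s⁻¹` gives the reverse inequality. -/
lemma W2_smul {d : ℕ} {μ ν : Measure (Euc d)} (hμ : μ ∈ P2a d) (hν : ν ∈ P2a d)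
    {s : ℝ} (hs : 0 < s) :
    W2 μ (ν.map (s • ·)) ^ 2 =
      s * W2 μ ν ^ 2 + (1 - s) * sndMom μ - s * (1 - s) * sndMom ν := by
  refine le_antisymm (W2_smul_le hμ hν hs) ?_
  have h := W2_smul_le hμ (smul_mem_P2a hν hs) (inv_pos.2 hs)
  have hid : (ν.map (s • ·)).map (s⁻¹ • ·) = ν := by
    rw [Measure.map_map (by fun_prop) (by fun_prop)]
    convert Measure.map_id using 2
    ext x : 1
    simp [smul_smul, hs.ne']
  rw [hid, sndMom_smul] at h
  have h' := mul_le_mul_of_nonneg_left h hs.le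
  have he : s * (s⁻¹ * W2 μ (ν.map (s • ·)) ^ 2 + (1 - s⁻¹) * sndMom μ -
      s⁻¹ * (1 - s⁻¹) * (s ^ 2 * sndMom ν)) =
      W2 μ (ν.map (s • ·)) ^ 2 - (1 - s) * sndMom μ + s * (1 - s) * sndMom ν := by
    field_simp
    ring
  linarith

lemma Epot_eq {d : ℕ} (lam : ℝ) (μ : Measure (Euc d)) :
    Epot lam μ = lam / 2 * sndMom μ := integral_const_mul _ _

/-- The proximal point is the dilation of `ν` by `s = (1 + λτ)⁻¹`: comparing with this dilation
in the minimality condition forces the distance to it to vanish. -/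
lemma proximal_eq_smul {d : ℕ} {lam τ : ℝ} (hτ : 0 < τ) (hlamτ : lam * τ > -1)
    {ν ντ : Measure (Euc d)} (hν : ν ∈ P2a d) (h : IsProximalPt (P2a d) (Epot lam) τ ν ντ) :
    ντ = ν.map ((1 + lam * τ)⁻¹ • ·) := by
  have hc : 0 < 1 + lam * τ := by linarith
  set s := (1 + lam * τ)⁻¹ with hs_def
  have hs : 0 < s := inv_pos.2 hc
  have hsl : s * (lam * τ) = 1 - s := by rw [hs_def]; field_simp; ring
  have hmem := smul_mem_P2a hν hs
  have hmin := h.2 _ hmem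
  have hself := W2_smul hν hν hs
  have hW0 : W2 ν ν ^ 2 = 0 := by rw [W2_sq, W2sq_self, ENNReal.toReal_zero]
  have hdist := W2_smul h.1 hν hs
  rw [Epot_eq, Epot_eq, hself, hW0, sndMom_smul, W2_comm] at hmin
  have hmin' := mul_le_mul_of_nonneg_left hmin (show 0 ≤ s * (2 * τ) by positivity)
  have e1 : s * (2 * τ) * (W2 ντ ν ^ 2 / (2 * τ) + lam / 2 * sndMom ντ) =
      s * W2 ντ ν ^ 2 + (s * (lam * τ)) * sndMom ντ := by field_simp
  have e2 : s * (2 * τ) * ((s * 0 + (1 - s) * sndMom ν - s * (1 - s) * sndMom ν) / (2 * τ) +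
      lam / 2 * (s ^ 2 * sndMom ν)) =
      s * ((1 - s) ^ 2 * sndMom ν) + (s * (lam * τ)) * (s ^ 2 * sndMom ν) := by
    field_simp; ring
  rw [e1, e2, hsl] at hmin'
  have hzero : W2 ντ (ν.map (s • ·)) ^ 2 = 0 := by
    refine le_antisymm ?_ (sq_nonneg _)
    rw [hdist]
    linarith
  rw [W2_sq, ENNReal.toReal_eq_zero_iff] at hzero
  have := h.1.1
  have := hmem.1
  exact eq_of_W2sq_eq_zero (hzero.resolve_right (W2sq_ne_top h.1 hmem))

/-- **Cross-distance identity for the quadratic potential** (Lemma 4.3, identity (4.4)).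
For `E(μ) = ∫ (λ/2)|x|² dμ`, `τ > 0` with `λτ > -1`, and `μ, ν ∈ P₂ᵃ` with `ν_τ`
the proximal point of `ν`:
`W₂²(μ, ν_τ) = (1+λτ)⁻¹ [ W₂²(μ,ν) + 2τ( E(μ) - (1+λτ)⁻¹ E(ν) ) ]`. -/
theorem potential_cross_distance_identity
    {d : ℕ} (lam τ : ℝ) (hτ : 0 < τ) (hlamτ : lam * τ > -1)
    (μ ν : Measure (Euc d)) (hμ : μ ∈ P2a d) (hν : ν ∈ P2a d)
    (ντ : Measure (Euc d)) (hντ : IsProximalPt (P2a d) (Epot lam) τ ν ντ) :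
    (W2 μ ντ) ^ 2 =
      (1 + lam * τ)⁻¹ *
        ((W2 μ ν) ^ 2 + 2 * τ * (Epot lam μ - (1 + lam * τ)⁻¹ * Epot lam ν)) := by
  rw [proximal_eq_smul hτ hlamτ hν hντ]
  have hc : 0 < 1 + lam * τ := by linarith
  rw [W2_smul hμ hν (inv_pos.2 hc), Epot_eq, Epot_eq]
  field_simp
  ring
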